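/- Assume (H₁) and (H₂) hold and L < 1, where L := (2·l_K²/η_G²)(l_G·√(4l_G²+2η_G²) + 2l_G² + η_G²), and set κ := 2·l_G·(√(l_G²+η_G²/2)+l_G)²/(η_G²·√(l_G²+η_G²/2)). Let x₁, x₂ ∈ C(I,H₁) and let u₁, u₂ : I → Ω be such that u_i(s) is the unique solution of PQVI(s, x_i(s)) for i = 1,2. Then ‖u₁(s) − u₂(s)‖ ≤ √(κ/(1−L))·‖x₁(s) − x₂(s)‖ for all s ∈ I. -/

import Mathlib

/-!
Fix `s` and write `D = ‖u₁ - u₂‖`, `X = ‖x₁ - x₂‖`, `t = lG / ηG`. The point `u₂` is its own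
projected step, `u₂ = P_{K(u₂)}[u₂ - r G(x₂, u₂)]` for any `r > 0`. Compare it with the same step
projected on the other set, `w = P_{K(u₁)}[u₂ - r G(x₂, u₂)]`, so that `‖w - u₂‖ ≤ lK D`.
Since `w ∈ K(u₁)`, the inequality solved by `u₁` together with strong pseudomonotonicity gives
`ηG ‖w - u₁‖² ≤ ⟪G(x₁, w), w - u₁⟫`. Adding the variational inequality characterizing `w`, tested
at `u₁`, and using the Lipschitz bound on `G` yields, for `r = 8 / ηG`,
`‖w - u₁‖ ≤ t X + (t + 1/8) ‖w - u₂‖`, hence `D ≤ t X + (t + 9/8) lK D`.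

Squaring with weights `1/8` and `7/8` gives `D² ≤ 8 t² X² + (8/7) (t + 9/8)² lK² D²`.
The claim follows because `8 t² ≤ κ` (`eight_mul_sq_le_kconst`, by AM-GM) and
`(8/7) (t + 9/8)² lK² ≤ (8 t² + 2) lK² ≤ L` (`le_Lconst`).
-/
open scoped RealInnerProductSpace
open Set

/-- Metric projection onto a set `C` of a real Hilbert space, characterized by the
variational inequality `⟪w - x, v - w⟫ ≥ 0` for all `v ∈ C`. -/
noncomputable def proj {H : Type*} [NormedAddCommGroup H] [InnerProductSpace ℝ H]
    (C : Set H) (x : H) : H :=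
  letI : Nonempty H := ⟨0⟩
  Classical.epsilon fun w => w ∈ C ∧ ∀ v ∈ C, 0 ≤ ⟪w - x, v - w⟫

/-- The constant `L = (2 l_K²/η_G²)(l_G √(4l_G²+2η_G²) + 2l_G² + η_G²)`. -/
noncomputable def Lconst (lK lG ηG : ℝ) : ℝ :=
  2 * lK ^ 2 / ηG ^ 2 * (lG * Real.sqrt (4 * lG ^ 2 + 2 * ηG ^ 2) + 2 * lG ^ 2 + ηG ^ 2)

/-- The constant `κ = 2 l_G (√(l_G²+η_G²/2)+l_G)² / (η_G² √(l_G²+η_G²/2))`. -/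
noncomputable def kconst (lG ηG : ℝ) : ℝ :=
  2 * lG * (Real.sqrt (lG ^ 2 + ηG ^ 2 / 2) + lG) ^ 2 /
    (ηG ^ 2 * Real.sqrt (lG ^ 2 + ηG ^ 2 / 2))

/-- Existence of the metric projection, making `Classical.epsilon` in `proj` meaningful. -/
theorem proj_spec {H : Type*} [NormedAddCommGroup H] [InnerProductSpace ℝ H] [CompleteSpace H]
    {C : Set H} (hne : C.Nonempty) (hcl : IsClosed C) (hcv : Convex ℝ C) (x : H) :
    proj C x ∈ C ∧ ∀ v ∈ C, 0 ≤ ⟪proj C x - x, v - proj C x⟫ := by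
  have hex : ∃ w, w ∈ C ∧ ∀ v ∈ C, 0 ≤ ⟪w - x, v - w⟫ := by
    obtain ⟨w, hw, h⟩ := exists_norm_eq_iInf_of_complete_convex hne hcl.isComplete hcv x
    refine ⟨w, hw, fun v hv => ?_⟩
    have := (norm_eq_iInf_iff_real_inner_le_zero hcv hw).1 h v hv
    rw [← neg_sub x w, inner_neg_left]
    linarith
  exact Classical.epsilon_spec hex

/-- Uniqueness of the metric projection: its variational inequality determines the point. -/
theorem proj_eq {H : Type*} [NormedAddCommGroup H] [InnerProductSpace ℝ H] [CompleteSpace H]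
    {C : Set H} (hne : C.Nonempty) (hcl : IsClosed C) (hcv : Convex ℝ C) {x w : H}
    (hw : w ∈ C) (h : ∀ v ∈ C, 0 ≤ ⟪w - x, v - w⟫) : proj C x = w := by
  obtain ⟨hp, hp'⟩ := proj_spec hne hcl hcv x
  have h1 := h _ hp
  have h2 := hp' _ hw
  set p := proj C x
  have h3 : ⟪w - x, p - w⟫ + ⟪p - x, w - p⟫ = -⟪p - w, p - w⟫ := by
    simp only [inner_sub_left, inner_sub_right]
    ring
  have h4 : ⟪p - w, p - w⟫ ≤ 0 := by linarith
  rw [real_inner_self_eq_norm_sq] at h4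
  exact sub_eq_zero.1 (norm_eq_zero.1 (pow_eq_zero_iff two_ne_zero |>.1 (le_antisymm h4 (sq_nonneg _))))

theorem eight_mul_sq_le_kconst {lG ηG : ℝ} (hl : 0 < lG) (hη : 0 < ηG) :
    8 * (lG / ηG) ^ 2 ≤ kconst lG ηG := by
  unfold kconst
  have hm : 0 < Real.sqrt (lG ^ 2 + ηG ^ 2 / 2) := Real.sqrt_pos.2 (by positivity)
  set m := Real.sqrt (lG ^ 2 + ηG ^ 2 / 2)
  rw [le_div_iff₀ (by positivity)]
  have : 8 * (lG / ηG) ^ 2 * (ηG ^ 2 * m) = 2 * lG * (4 * m * lG) := by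
    field_simp
    ring
  rw [this]
  gcongr
  nlinarith [sq_nonneg (m - lG)]

theorem le_Lconst {lK lG ηG : ℝ} (hl : 0 < lG) (hη : 0 < ηG) :
    8 / 7 * (lG / ηG + 9 / 8) ^ 2 * lK ^ 2 ≤ Lconst lK lG ηG := by
  have hs : 2 * lG ≤ Real.sqrt (4 * lG ^ 2 + 2 * ηG ^ 2) :=
    Real.le_sqrt_of_sq_le (by nlinarith [sq_nonneg ηG])
  calc 8 / 7 * (lG / ηG + 9 / 8) ^ 2 * lK ^ 2
      ≤ (8 * (lG / ηG) ^ 2 + 2) * lK ^ 2 := by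
        gcongr
        nlinarith [sq_nonneg (lG / ηG - 3 / 16)]
    _ = 2 * lK ^ 2 / ηG ^ 2 * (lG * (2 * lG) + 2 * lG ^ 2 + ηG ^ 2) := by
        field_simp
        ring
    _ ≤ Lconst lK lG ηG := by
        unfold Lconst
        gcongr

/-- Lemma 3.2 (Step 3): Lipschitz dependence of the solution of the time-dependent
parameterized quasi-variational inequality on the parameter `x`. -/
theorem pqvi_solution_lipschitz_dependence
    {H₁ H₂ : Type*} [NormedAddCommGroup H₁] [InnerProductSpace ℝ H₁] [CompleteSpace H₁]
    [NormedAddCommGroup H₂] [InnerProductSpace ℝ H₂] [CompleteSpace H₂]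
    (T : ℝ) (hT : 0 < T) (q : ℝ) (hq : q ∈ Ioc (0:ℝ) 1)
    (Ω : Set H₂) (hΩne : Ω.Nonempty) (hΩcl : IsClosed Ω) (hΩcv : Convex ℝ Ω)
    (K : H₂ → Set H₂)
    (hK : ∀ u ∈ Ω, (K u).Nonempty ∧ IsClosed (K u) ∧ Convex ℝ (K u) ∧ K u ⊆ Ω)
    (G : ℝ → H₁ → H₂ → H₂) (lG ηG : ℝ) (hlG : 0 < lG) (hηG : 0 < ηG)
    (hGLip : ∀ s₁ ∈ Icc (0:ℝ) T, ∀ s₂ ∈ Icc (0:ℝ) T, ∀ (x₁ x₂ : H₁), ∀ u₁ ∈ Ω, ∀ u₂ ∈ Ω,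
      ‖G s₂ x₂ u₂ - G s₁ x₁ u₁‖ ≤ lG * (|s₂ - s₁| + ‖x₂ - x₁‖ + ‖u₂ - u₁‖))
    (hGpm : ∀ s ∈ Icc (0:ℝ) T, ∀ (x : H₁), ∀ u ∈ Ω, ∀ u₁ ∈ K u, ∀ u₂ ∈ K u,
      0 ≤ ⟪G s x u₂, u₁ - u₂⟫ → ηG * ‖u₁ - u₂‖ ^ 2 ≤ ⟪G s x u₁, u₁ - u₂⟫)
    (lK : ℝ) (hlK : 0 ≤ lK)
    (hKproj : ∀ u₁ ∈ Ω, ∀ u₂ ∈ Ω, ∀ ϖ : H₂,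
      ‖proj (K u₂) ϖ - proj (K u₁) ϖ‖ ≤ lK * ‖u₂ - u₁‖)
    (hL : Lconst lK lG ηG < 1)
    (x₁ x₂ : ℝ → H₁) (hx₁ : ContinuousOn x₁ (Icc 0 T)) (hx₂ : ContinuousOn x₂ (Icc 0 T))
    (u₁ u₂ : ℝ → H₂)
    (hu₁ : ∀ s ∈ Icc (0:ℝ) T, u₁ s ∈ Ω ∧ u₁ s ∈ K (u₁ s) ∧
      ∀ v ∈ K (u₁ s), 0 ≤ ⟪G s (x₁ s) (u₁ s), v - u₁ s⟫)
    (hu₂ : ∀ s ∈ Icc (0:ℝ) T, u₂ s ∈ Ω ∧ u₂ s ∈ K (u₂ s) ∧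
      ∀ v ∈ K (u₂ s), 0 ≤ ⟪G s (x₂ s) (u₂ s), v - u₂ s⟫) :
    ∀ s ∈ Icc (0:ℝ) T,
      ‖u₁ s - u₂ s‖ ≤ Real.sqrt (kconst lG ηG / (1 - Lconst lK lG ηG)) * ‖x₁ s - x₂ s‖ := by
  intro s hs
  obtain ⟨hΩ₁, hK₁, hv₁⟩ := hu₁ s hs
  obtain ⟨hΩ₂, hK₂, hv₂⟩ := hu₂ s hs
  obtain ⟨ne₁, cl₁, cv₁, sub₁⟩ := hK _ hΩ₁
  obtain ⟨ne₂, cl₂, cv₂, -⟩ := hK _ hΩ₂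
  set g := G s (x₂ s) (u₂ s)
  set ϖ := u₂ s - (8 / ηG) • g
  -- a solution is a fixed point of the projected step, for any step size
  have hfix : proj (K (u₂ s)) ϖ = u₂ s := by
    refine proj_eq ne₂ cl₂ cv₂ hK₂ fun v hv => ?_
    have : u₂ s - ϖ = (8 / ηG) • g := sub_sub_cancel _ _
    rw [this, real_inner_smul_left]
    exact mul_nonneg (by positivity) (hv₂ v hv)
  obtain ⟨hw, hw'⟩ := proj_spec ne₁ cl₁ cv₁ ϖ
  have hb := hKproj _ hΩ₂ _ hΩ₁ ϖ
  rw [hfix] at hb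
  set w := proj (K (u₁ s)) ϖ
  have h1 := hGpm s hs (x₁ s) _ hΩ₁ w hw _ hK₁ (hv₁ w hw)
  have h2 := hw' _ hK₁
  have h3 := hGLip s hs s hs (x₂ s) (x₁ s) _ hΩ₂ w (sub₁ hw)
  rw [sub_self, abs_zero, zero_add] at h3
  have h4 : ⟪G s (x₁ s) w - g, w - u₁ s⟫ ≤
      lG * (‖x₁ s - x₂ s‖ + ‖w - u₂ s‖) * ‖w - u₁ s‖ :=
    (real_inner_le_norm _ _).trans (by gcongr)
  have h5 : ⟪w - ϖ, u₁ s - w⟫ = -⟪w - u₂ s, w - u₁ s⟫ - 8 / ηG * ⟪g, w - u₁ s⟫ := by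
    have : w - ϖ = (w - u₂ s) + (8 / ηG) • g := by
      simp only [ϖ]
      abel
    rw [this, ← neg_sub w (u₁ s), inner_neg_right, inner_add_left, real_inner_smul_left]
    ring
  have h6 : -⟪w - u₂ s, w - u₁ s⟫ ≤ ‖w - u₂ s‖ * ‖w - u₁ s‖ :=
    (neg_le_abs _).trans (abs_real_inner_le_norm _ _)
  rw [inner_sub_left] at h4
  have hD : ‖u₁ s - u₂ s‖ ≤ ‖w - u₁ s‖ + ‖w - u₂ s‖ := by
    rw [norm_sub_rev w (u₁ s)]
    exact norm_sub_le_norm_sub_add_norm_sub _ _ _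
  have ha0 := norm_nonneg (w - u₁ s)
  set a := ‖w - u₁ s‖
  set b := ‖w - u₂ s‖
  set X := ‖x₁ s - x₂ s‖
  have hX0 : 0 ≤ X := norm_nonneg _
  have hD0 : 0 ≤ ‖u₁ s - u₂ s‖ := norm_nonneg _
  set D := ‖u₁ s - u₂ s‖
  have hκ := eight_mul_sq_le_kconst hlG hηG
  have hL' := le_Lconst (lK := lK) hlG hηG
  have ht : 0 < lG / ηG := by positivity
  have hlt : lG = lG / ηG * ηG := by field_simp
  set t := lG / ηG
  have hmain : a * a ≤ (t * X + (t + 1 / 8) * b) * a := by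
    have e1 : 8 / ηG * (ηG * a ^ 2) ≤ 8 / ηG * (⟪g, w - u₁ s⟫ + lG * (X + b) * a) := by
      gcongr
      linarith
    have e2 : 8 / ηG * (ηG * a ^ 2) = 8 * a ^ 2 := by field_simp
    have e3 : 8 / ηG * (⟪g, w - u₁ s⟫ + lG * (X + b) * a) =
        8 / ηG * ⟪g, w - u₁ s⟫ + 8 * t * (X + b) * a := by
      simp only [t]
      field_simp
    rw [e2, e3] at e1
    linarith
  have hb0 : 0 ≤ b := norm_nonneg _
  have ha : a ≤ t * X + (t + 1 / 8) * b := by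
    rcases ha0.eq_or_lt with h | h
    · rw [← h]
      positivity
    · exact le_of_mul_le_mul_right hmain h
  have hDle : D ≤ t * X + (t + 9 / 8) * (lK * D) := by
    have : (t + 9 / 8) * b ≤ (t + 9 / 8) * (lK * D) := by gcongr
    linarith
  have hsq : D ^ 2 ≤ 8 * t ^ 2 * X ^ 2 + 8 / 7 * (t + 9 / 8) ^ 2 * lK ^ 2 * D ^ 2 := by
    have e : D ^ 2 ≤ (t * X + (t + 9 / 8) * (lK * D)) ^ 2 := by gcongr
    -- `(p + q)² ≤ 8 p² + (8/7) q²`, the defect being `(7 p - q)² / 7`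
    linarith [sq_nonneg (7 * (t * X) - (t + 9 / 8) * (lK * D))]
  have hfin : D ^ 2 ≤ kconst lG ηG * X ^ 2 + Lconst lK lG ηG * D ^ 2 := by
    refine hsq.trans ?_
    gcongr
  have hL0 : 0 < 1 - Lconst lK lG ηG := by linarith
  have hX : Real.sqrt (X ^ 2) = X := Real.sqrt_sq hX0
  have hκ0 : 0 ≤ kconst lG ηG := le_trans (by positivity) hκ
  rw [← hX, ← Real.sqrt_mul (by positivity)]
  apply Real.le_sqrt_of_sq_le
  rw [div_mul_eq_mul_div, le_div_iff₀ hL0]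
  linarith
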